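/- Threshold corollary (superposition security of 2τ-private secret sharing, underlying the zero-knowledge simulation): Let n, k, τ ∈ ℕ, let 𝕊 be a type of secrets, R a finite type of randomness, and p : R → ℝ with p(r) ≥ 0 for all r. For each party i ∈ Fin n let v_i : 𝕊 → R → {0,1}^k be its share, and define padded joint views w_A(s, r) as before. Assume the scheme is perfectly 2τ-private: for every subset B ⊆ Fin n with |B| ≤ 2τ, all s, s' ∈ 𝕊, and every u : Fin n → {0,1}^k, Σ_{r : ∀ i ∈ B, v_i(s, r) = u(i)} p(r) = Σ_{r : ∀ i ∈ B, v_i(s', r) = u(i)} p(r). Let F = {A ⊆ Fin n : |A| ≤ τ}. Then for any finite environment type X, any amplitudes α : X × Finset(Fin n) × (Fin n → {0,1}^k) → ℂ, and the adversary states ρ_s = Σ_r p(r) ψ_s(r) ψ_s(r)^* with ψ_s(r) = Σ_{x, A ∈ F, a} α(x, A, a) e_{(x, A, a ⊕ w_A(s,r))}, one has ρ_s = ρ_{s'} for all s, s' ∈ 𝕊. In words: a perfectly 2τ-private secret sharing scheme remains perfectly secure even when the adversary queries subsets of at most τ shares in superposition. -/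

import Mathlib

/-!
In block `(x, A)` the query merely translates the basis by the padded view `w_A`, so the entry of
`ρ_s` at `((x, A, a), (y, C, c))` is the expectation of a function of `w_A` and `w_C`. Both of these
are restrictions of `w_{A ∪ C}`, hence privacy of the single classical coalition `A ∪ C` makes the
entry independent of `s`. Coherences between two queries of size `τ` are what costs the factor `2`
in the privacy threshold.
-/

open scoped BigOperators

/-- The padded joint view of the parties in `A`: party `i`'s share if `i ∈ A`,
and the all-zero string otherwise. -/
def paddedView (n k : ℕ) {𝕊 R : Type*}
    (v : Fin n → 𝕊 → R → (Fin k → ZMod 2))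
    (A : Finset (Fin n)) (s : 𝕊) (r : R) : Fin n → (Fin k → ZMod 2) :=
  fun i => if i ∈ A then v i s r else 0

/-- The state `ψ_s(r)` obtained from the adversary's superposition query:
`∑_{x, A ∈ F, a} α(x, A, a) · e_{(x, A, a ⊕ w_A(s,r))}`. -/
noncomputable def advQueryState (n k : ℕ) {𝕊 R X : Type*} [DecidableEq X]
    (v : Fin n → 𝕊 → R → (Fin k → ZMod 2)) (F : Finset (Finset (Fin n)))
    (α : X × Finset (Fin n) × (Fin n → Fin k → ZMod 2) → ℂ)
    (s : 𝕊) (r : R) [Fintype X] :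
    X × Finset (Fin n) × (Fin n → Fin k → ZMod 2) → ℂ :=
  ∑ x : X, ∑ A ∈ F, ∑ a : Fin n → Fin k → ZMod 2,
    α (x, A, a) •
      (Pi.single (x, A, a + paddedView n k v A s r) 1 :
        X × Finset (Fin n) × (Fin n → Fin k → ZMod 2) → ℂ)

/-- Perfect privacy against the coalition `B`: under the weights `p` on the randomness, the joint
distribution of the shares of `B` does not depend on the secret. The shares are compared with
an assignment `u` of all parties, of which only the values on `B` matter. -/
def IsPrivateAgainst {n : ℕ} {𝕊 R σ K : Type*} [Fintype R] [DecidableEq σ]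
    [AddCommMonoid K] (p : R → K) (v : Fin n → 𝕊 → R → σ) (B : Finset (Fin n)) : Prop :=
  ∀ s s' : 𝕊, ∀ u : Fin n → σ,
    ∑ r with ∀ i ∈ B, v i s r = u i, p r = ∑ r with ∀ i ∈ B, v i s' r = u i, p r

/-- The adversary's state `ρ_s = ∑_r p(r) ψ_s(r) ψ_s(r)^*`, as a matrix in the computational
basis. It is not normalised: its trace need not be `1`. -/
noncomputable def advDensityMatrix (n k : ℕ) {𝕊 R X : Type*} [Fintype R] [Fintype X]
    [DecidableEq X] (p : R → ℝ) (v : Fin n → 𝕊 → R → (Fin k → ZMod 2))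
    (F : Finset (Finset (Fin n))) (α : X × Finset (Fin n) × (Fin n → Fin k → ZMod 2) → ℂ) (s : 𝕊) :
    Matrix (X × Finset (Fin n) × (Fin n → Fin k → ZMod 2))
      (X × Finset (Fin n) × (Fin n → Fin k → ZMod 2)) ℂ :=
  ∑ r, (p r : ℂ) •
    Matrix.vecMulVec (advQueryState n k v F α s r) (star (advQueryState n k v F α s r))

theorem card_union_le_two_mul {ι : Type*} [DecidableEq ι] {A C : Finset ι} {m : ℕ}
    (hA : A.card ≤ m) (hC : C.card ≤ m) : (A ∪ C).card ≤ 2 * m :=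
  calc (A ∪ C).card ≤ A.card + C.card := Finset.card_union_le A C
    _ ≤ m + m := add_le_add hA hC
    _ = 2 * m := (two_mul m).symm

theorem sum_smul_comp_eq_sum_fiber_smul {ι γ K M : Type*} [Fintype ι] [Fintype γ] [DecidableEq γ]
    [Semiring K] [AddCommMonoid M] [Module K M] (p : ι → K) (f : ι → γ) (φ : γ → M) :
    ∑ i, p i • φ (f i) = ∑ c, (∑ i with f i = c, p i) • φ c := by
  simp_rw [Finset.sum_smul]
  rw [← Finset.sum_fiberwise Finset.univ f]
  refine Finset.sum_congr rfl fun c _ => Finset.sum_congr rfl fun i hi => ?_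
  rw [(Finset.mem_filter.mp hi).2]

section PaddedView

variable {n k : ℕ} {𝕊 R : Type*} (v : Fin n → 𝕊 → R → (Fin k → ZMod 2))

theorem paddedView_eq_iff (B : Finset (Fin n)) (s : 𝕊) (r : R) (u : Fin n → Fin k → ZMod 2) :
    paddedView n k v B s r = u ↔ (∀ i ∈ B, v i s r = u i) ∧ ∀ i ∉ B, u i = 0 := by
  simp only [funext_iff (f := paddedView n k v B s r), paddedView, ← forall_and]
  refine forall_congr' fun i => ?_
  by_cases hi : i ∈ B <;> simp [hi, eq_comm]

theorem piecewise_paddedView_of_subset {A B : Finset (Fin n)} (hAB : A ⊆ B) (s : 𝕊) (r : R) :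
    A.piecewise (paddedView n k v B s r) 0 = paddedView n k v A s r :=
  A.piecewise_piecewise_of_subset_left hAB (fun i => v i s r) 0 0

variable {v} [Fintype R] {B : Finset (Fin n)}

theorem IsPrivateAgainst.sum_fiber_paddedView_eq {K : Type*} [AddCommMonoid K] {p : R → K}
    (hB : IsPrivateAgainst p v B) (s s' : 𝕊) (u : Fin n → Fin k → ZMod 2) :
    ∑ r with paddedView n k v B s r = u, p r = ∑ r with paddedView n k v B s' r = u, p r := by
  simp only [paddedView_eq_iff]
  by_cases hu : ∀ i ∉ B, u i = 0
  · simpa only [eq_true hu, and_true] using hB s s' u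
  · simp only [hu, and_false]

theorem IsPrivateAgainst.sum_smul_paddedView_eq {K M : Type*} [Semiring K] [AddCommMonoid M]
    [Module K M] {p : R → K} (hB : IsPrivateAgainst p v B) (s s' : 𝕊)
    (φ : (Fin n → Fin k → ZMod 2) → M) :
    ∑ r, p r • φ (paddedView n k v B s r) = ∑ r, p r • φ (paddedView n k v B s' r) := by
  rw [sum_smul_comp_eq_sum_fiber_smul p (paddedView n k v B s),
    sum_smul_comp_eq_sum_fiber_smul p (paddedView n k v B s')]
  exact Finset.sum_congr rfl fun u _ => congrArg (· • φ u) (hB.sum_fiber_paddedView_eq s s' u)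

end PaddedView

section Query

variable {n k : ℕ} {𝕊 R X : Type*} [Fintype X] [DecidableEq X]
  (v : Fin n → 𝕊 → R → (Fin k → ZMod 2)) {F : Finset (Finset (Fin n))}
  (α : X × Finset (Fin n) × (Fin n → Fin k → ZMod 2) → ℂ)

theorem advQueryState_apply (s : 𝕊) (r : R) (x : X) (A : Finset (Fin n))
    (b : Fin n → Fin k → ZMod 2) :
    advQueryState n k v F α s r (x, A, b) =
      if A ∈ F then α (x, A, b - paddedView n k v A s r) else 0 := by
  have single_apply (y : X) (C : Finset (Fin n)) (a : Fin n → Fin k → ZMod 2) :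
      (Pi.single (y, C, a + paddedView n k v C s r) 1 :
          X × Finset (Fin n) × (Fin n → Fin k → ZMod 2) → ℂ) (x, A, b) =
        if x = y then if A = C then if b - paddedView n k v C s r = a then 1 else 0 else 0
        else 0 := by
    simp only [Pi.single_apply, Prod.mk.injEq, sub_eq_iff_eq_add, ite_and]
  simp [advQueryState, Finset.sum_apply, single_apply]

variable [Fintype R]

theorem advDensityMatrix_apply_of_mem (p : R → ℝ) {A C : Finset (Fin n)} (hA : A ∈ F) (hC : C ∈ F)
    (s : 𝕊) (x y : X) (a c : Fin n → Fin k → ZMod 2) :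
    advDensityMatrix n k p v F α s (x, A, a) (y, C, c) =
      ∑ r, p r • (α (x, A, a - paddedView n k v A s r) *
        star (α (y, C, c - paddedView n k v C s r))) := by
  simp [advDensityMatrix, Matrix.sum_apply, Matrix.vecMulVec_apply, advQueryState_apply, hA, hC]

theorem advDensityMatrix_apply_of_notMem (p : R → ℝ) {A C : Finset (Fin n)}
    (hAC : ¬(A ∈ F ∧ C ∈ F)) (s : 𝕊) (x y : X) (a c : Fin n → Fin k → ZMod 2) :
    advDensityMatrix n k p v F α s (x, A, a) (y, C, c) = 0 := by
  rcases not_and_or.mp hAC with hA | hC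
  · simp [advDensityMatrix, Matrix.sum_apply, Matrix.vecMulVec_apply, advQueryState_apply, hA]
  · simp [advDensityMatrix, Matrix.sum_apply, Matrix.vecMulVec_apply, advQueryState_apply, hC]

theorem IsPrivateAgainst.advDensityMatrix_apply_eq {p : R → ℝ} {v} {A C : Finset (Fin n)}
    (hAC : IsPrivateAgainst p v (A ∪ C)) (hA : A ∈ F) (hC : C ∈ F) (s s' : 𝕊) (x y : X)
    (a c : Fin n → Fin k → ZMod 2) :
    advDensityMatrix n k p v F α s (x, A, a) (y, C, c) =
      advDensityMatrix n k p v F α s' (x, A, a) (y, C, c) := by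
  simp only [advDensityMatrix_apply_of_mem v α p hA hC,
    ← piecewise_paddedView_of_subset v (Finset.subset_union_left : A ⊆ A ∪ C),
    ← piecewise_paddedView_of_subset v (Finset.subset_union_right : C ⊆ A ∪ C)]
  exact hAC.sum_smul_paddedView_eq s s' fun w =>
    α (x, A, a - A.piecewise w 0) * star (α (y, C, c - C.piecewise w 0))

end Query

theorem threshold_secret_sharing_superposition_secure_general (n k : ℕ) {𝕊 R X : Type*}
    [Fintype R] [Fintype X] [DecidableEq X] (p : R → ℝ) (v : Fin n → 𝕊 → R → (Fin k → ZMod 2))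
    (F : Finset (Finset (Fin n)))
    (hpriv : ∀ A ∈ F, ∀ C ∈ F, IsPrivateAgainst p v (A ∪ C))
    (α : X × Finset (Fin n) × (Fin n → Fin k → ZMod 2) → ℂ) (s s' : 𝕊) :
    advDensityMatrix n k p v F α s = advDensityMatrix n k p v F α s' := by
  ext ⟨x, A, a⟩ ⟨y, C, c⟩
  by_cases hAC : A ∈ F ∧ C ∈ F
  · exact (hpriv A hAC.1 C hAC.2).advDensityMatrix_apply_eq α hAC.1 hAC.2 s s' x y a c
  · simp only [advDensityMatrix_apply_of_notMem v α p hAC]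

/-- Threshold corollary: a perfectly `2τ`-private secret sharing scheme remains
perfectly secure even when the adversary queries subsets of at most `τ` shares
in superposition. -/
theorem threshold_secret_sharing_superposition_secure
    (n k τ : ℕ) {𝕊 R X : Type*} [Fintype R] [Fintype X] [DecidableEq X]
    (p : R → ℝ) (hp : ∀ r, 0 ≤ p r)
    (v : Fin n → 𝕊 → R → (Fin k → ZMod 2))
    (hpriv : ∀ B : Finset (Fin n), B.card ≤ 2 * τ → ∀ s s' : 𝕊,
      ∀ u : Fin n → (Fin k → ZMod 2),
      ∑ r ∈ Finset.univ.filter (fun r : R => ∀ i ∈ B, v i s r = u i), p r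
        = ∑ r ∈ Finset.univ.filter (fun r : R => ∀ i ∈ B, v i s' r = u i), p r)
    (α : X × Finset (Fin n) × (Fin n → Fin k → ZMod 2) → ℂ)
    (s s' : 𝕊) :
    ∑ r : R, (p r : ℂ) •
        Matrix.vecMulVec
          (advQueryState n k v (Finset.univ.filter (fun A : Finset (Fin n) => A.card ≤ τ)) α s r)
          (star (advQueryState n k v (Finset.univ.filter (fun A : Finset (Fin n) => A.card ≤ τ)) α s r))
      = ∑ r : R, (p r : ℂ) •
        Matrix.vecMulVec
          (advQueryState n k v (Finset.univ.filter (fun A : Finset (Fin n) => A.card ≤ τ)) α s' r)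
          (star (advQueryState n k v (Finset.univ.filter (fun A : Finset (Fin n) => A.card ≤ τ)) α s' r)) := by
  exact threshold_secret_sharing_superposition_secure_general n k p v _ (fun A hA C hC =>
    hpriv (A ∪ C) (card_union_le_two_mul (by simpa using hA) (by simpa using hC))) α s s'
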